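/- For every parameter h ∈ (1,2] and every natural number k ≥ 1, the tent map T_h has a periodic point of least period 2^k; that is, there exists x ∈ [0,1] with T_h^[2^k](x) = x and T_h^[m](x) ≠ x for all 1 ≤ m < 2^k. -/

import Mathlib

/-- The tent map with parameter `h`. -/
noncomputable def tentMap (h : ℝ) (x : ℝ) : ℝ :=
  if x ≤ 1 / 2 then h * x else h * (1 - x)

/-- The affine map sending `[0, 1]` onto the interval `[1 / (h + 1), h / (h + 1)]`, on which the
second iterate of `tentMap h` is conjugate to `tentMap (h ^ 2)`. -/
noncomputable def tentRenorm (h x : ℝ) : ℝ := (h - (h - 1) * x) / (h + 1)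

theorem tentMap_tentRenorm {h : ℝ} (hh : 1 < h) (x : ℝ) :
    tentMap h (tentRenorm h x) =
      if x ≤ 1 / 2 then h * (1 + (h - 1) * x) / (h + 1)
      else h * (h - (h - 1) * x) / (h + 1) := by
  have hpos : 0 < h + 1 := by linarith
  unfold tentMap tentRenorm
  simp only [div_le_iff₀ hpos]
  split_ifs with h1 h2 h2
  · have : x = 1 / 2 := by nlinarith
    subst this
    field_simp
    ring
  · ring
  · field_simp
    ring
  · exact absurd (by nlinarith) h1

theorem div_le_tentMap_tentRenorm {h x : ℝ} (hh : 1 < h) (hx : x ∈ Set.Icc (0 : ℝ) 1) :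
    h / (h + 1) ≤ tentMap h (tentRenorm h x) := by
  obtain ⟨h0, h1⟩ := hx
  rw [tentMap_tentRenorm hh]
  split_ifs
  · gcongr
    nlinarith [mul_nonneg (sub_nonneg.2 hh.le) h0]
  · gcongr
    nlinarith [mul_nonneg (sub_nonneg.2 hh.le) (sub_nonneg.2 h1)]

theorem tentMap_of_half_lt {h y : ℝ} (hy : 1 / 2 < y) : tentMap h y = h * (1 - y) :=
  if_neg hy.not_ge

theorem half_lt_tentMap_tentRenorm {h x : ℝ} (hh : 1 < h) (hx : x ∈ Set.Icc (0 : ℝ) 1) :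
    1 / 2 < tentMap h (tentRenorm h x) := by
  refine lt_of_lt_of_le ?_ (div_le_tentMap_tentRenorm hh hx)
  rw [div_lt_div_iff₀] <;> linarith

theorem tentMap_tentMap_tentRenorm {h x : ℝ} (hh : 1 < h) (hx : x ∈ Set.Icc (0 : ℝ) 1) :
    tentMap h (tentMap h (tentRenorm h x)) = tentRenorm h (tentMap (h ^ 2) x) := by
  have hpos : 0 < h + 1 := by linarith
  rw [tentMap_of_half_lt (half_lt_tentMap_tentRenorm hh hx), tentMap_tentRenorm hh]
  unfold tentRenorm tentMap
  split_ifs <;> field_simp <;> ring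

theorem tentRenorm_mem_Icc {h x : ℝ} (hh : 1 < h) (hx : x ∈ Set.Icc (0 : ℝ) 1) :
    tentRenorm h x ∈ Set.Icc (0 : ℝ) 1 := by
  obtain ⟨h0, h1⟩ := hx
  unfold tentRenorm
  constructor
  · apply div_nonneg <;> nlinarith
  · rw [div_le_one] <;> nlinarith

theorem tentRenorm_le {h x : ℝ} (hh : 1 < h) (hx : 0 ≤ x) : tentRenorm h x ≤ h / (h + 1) := by
  unfold tentRenorm
  gcongr
  nlinarith

theorem tentRenorm_injective {h : ℝ} (hh : 1 < h) : Function.Injective (tentRenorm h) := by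
  intro x y hxy
  have hpos : h + 1 ≠ 0 := by linarith
  have hne : h - 1 ≠ 0 := by linarith
  unfold tentRenorm at hxy
  rw [div_left_inj' hpos] at hxy
  exact mul_left_cancel₀ hne (by linarith)

theorem tentMap_tentRenorm_ne {h x : ℝ} (hh : 1 < h) (hx : x ∈ Set.Icc (0 : ℝ) 1) (hx0 : x ≠ 0) :
    tentMap h (tentRenorm h x) ≠ tentRenorm h x := by
  intro heq
  apply hx0
  apply tentRenorm_injective hh
  have h1 := div_le_tentMap_tentRenorm hh hx
  rw [heq] at h1
  rw [(tentRenorm_le hh hx.1).antisymm h1]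
  simp [tentRenorm]

theorem iterate_two_mul_tentRenorm {h x : ℝ} (hh : 1 < h)
    (hx : ∀ n, (tentMap (h ^ 2))^[n] x ∈ Set.Icc (0 : ℝ) 1) (n : ℕ) :
    (tentMap h)^[2 * n] (tentRenorm h x) = tentRenorm h ((tentMap (h ^ 2))^[n] x) := by
  induction n with
  | zero => rfl
  | succ n ih =>
    rw [show 2 * (n + 1) = 2 * n + 1 + 1 by ring, Function.iterate_succ_apply',
      Function.iterate_succ_apply', ih, tentMap_tentMap_tentRenorm hh (hx n),
      Function.iterate_succ_apply']

theorem iterate_tentRenorm_mem_Icc {h x : ℝ} (hh : 1 < h)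
    (hx : ∀ n, (tentMap (h ^ 2))^[n] x ∈ Set.Icc (0 : ℝ) 1) (n : ℕ) :
    (tentMap h)^[n] (tentRenorm h x) ∈ Set.Icc (0 : ℝ) 1 := by
  obtain ⟨m, rfl | rfl⟩ := n.even_or_odd'
  · rw [iterate_two_mul_tentRenorm hh hx]
    exact tentRenorm_mem_Icc hh (hx m)
  · rw [Function.iterate_succ_apply', iterate_two_mul_tentRenorm hh hx]
    have hhalf := half_lt_tentMap_tentRenorm hh (hx m)
    have hnonneg := (tentRenorm_mem_Icc hh (hx (m + 1))).1
    rw [Function.iterate_succ_apply', ← tentMap_tentMap_tentRenorm hh (hx m),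
      tentMap_of_half_lt hhalf] at hnonneg
    have := nonneg_of_mul_nonneg_right hnonneg (by linarith)
    exact ⟨by linarith, by linarith⟩

theorem minimalPeriod_tentRenorm {h x : ℝ} (hh : 1 < h)
    (hx : ∀ n, (tentMap (h ^ 2))^[n] x ∈ Set.Icc (0 : ℝ) 1) (hx0 : x ≠ 0) {k : ℕ}
    (hk : Function.minimalPeriod (tentMap (h ^ 2)) x = 2 ^ k) :
    Function.minimalPeriod (tentMap h) (tentRenorm h x) = 2 ^ (k + 1) := by
  have hdvd (n : ℕ) : Function.minimalPeriod (tentMap h) (tentRenorm h x) ∣ 2 * n ↔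
      2 ^ k ∣ n := by
    rw [← Function.isPeriodicPt_iff_minimalPeriod_dvd, ← hk,
      ← Function.isPeriodicPt_iff_minimalPeriod_dvd, Function.IsPeriodicPt, Function.IsFixedPt,
      iterate_two_mul_tentRenorm hh hx, (tentRenorm_injective hh).eq_iff]
    rfl
  have hd := (hdvd (2 ^ k)).2 dvd_rfl
  rw [← pow_succ'] at hd
  obtain ⟨i, hi, heq⟩ := (Nat.dvd_prime_pow Nat.prime_two).1 hd
  rw [heq]
  cases i with
  | zero =>
    rw [pow_zero, Function.minimalPeriod_eq_one_iff_isFixedPt] at heq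
    exact absurd heq (tentMap_tentRenorm_ne hh (hx 0) hx0)
  | succ i =>
    have hki := (hdvd (2 ^ i)).1 (by rw [heq, pow_succ'])
    rw [Nat.pow_dvd_pow_iff_le_right (by norm_num)] at hki
    rw [show i = k by omega]

theorem exists_minimalPeriod_tentMap (k : ℕ) {h : ℝ} (hh : 1 < h) :
    ∃ x, x ≠ 0 ∧ (∀ n, (tentMap h)^[n] x ∈ Set.Icc (0 : ℝ) 1) ∧
      Function.minimalPeriod (tentMap h) x = 2 ^ k := by
  induction k generalizing h with
  | zero =>
    have hpos : 0 < h + 1 := by linarith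
    have hfix : Function.IsFixedPt (tentMap h) (h / (h + 1)) := by
      rw [Function.IsFixedPt, tentMap_of_half_lt (by rw [div_lt_div_iff₀] <;> linarith)]
      field_simp
      ring
    refine ⟨h / (h + 1), by positivity, fun n => ?_, ?_⟩
    · rw [hfix.iterate n]
      exact ⟨by positivity, by rw [div_le_one hpos]; linarith⟩
    · rwa [pow_zero, Function.minimalPeriod_eq_one_iff_isFixedPt]
  | succ k ih =>
    obtain ⟨x, hx0, hx, hk⟩ := ih (one_lt_pow₀ hh two_ne_zero)
    refine ⟨tentRenorm h x, ?_, iterate_tentRenorm_mem_Icc hh hx,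
      minimalPeriod_tentRenorm hh hx hx0 hk⟩
    have hx1 := (hx 0).2
    simp only [Function.iterate_zero, id] at hx1
    unfold tentRenorm
    exact (div_pos (by nlinarith) (by linarith)).ne'

theorem tent_has_period_two_pow (h : ℝ) (hh : h ∈ Set.Ioc (1 : ℝ) 2)
    (k : ℕ) (hk : 1 ≤ k) :
    ∃ x ∈ Set.Icc (0 : ℝ) 1, (tentMap h)^[2 ^ k] x = x ∧
      ∀ m : ℕ, 1 ≤ m → m < 2 ^ k → (tentMap h)^[m] x ≠ x := by
  obtain ⟨x, -, hx, hmin⟩ := exists_minimalPeriod_tentMap k hh.1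
  refine ⟨x, hx 0, ?_, fun m hm hlt heq => ?_⟩
  · rw [← hmin]
    exact Function.iterate_minimalPeriod
  · rw [← hmin] at hlt
    exact Function.not_isPeriodicPt_of_pos_of_lt_minimalPeriod (by omega) hlt heq
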